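/- arXiv:2011.10018 — 4 statements merged into one kernel-verified Lean document; each statement's English description precedes it below -/
import Mathlib

section
/- For every b = (b₀,…,b_{n−1}) ∈ Kⁿ and every 1 ≤ k ≤ n, the element e_k(β₁(b),…,βₙ(b)) of L lies in the image of K in L; that is, there exists c ∈ K with algebraMap K L c = e_k(β₁(b),…,βₙ(b)). -/
open Polynomial

/-- Claim 4.3, first part: with `p` a monic separable irreducible polynomial of
degree `n ≥ 1` over `K`, `L` a splitting field of `p`, and `α₁,…,αₙ` the distinct
roots of `p` in `L`, for every `b ∈ Kⁿ` and `1 ≤ k ≤ n` the elementary symmetric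
function `e_k(β₁(b),…,βₙ(b))`, where `β_i(b) = b₀ + b₁α_i + ⋯ + b_{n−1}α_i^{n−1}`,
lies in the image of `K` in `L`. -/
theorem stmt_2 {K L : Type*} [Field K] [Field L] [Algebra K L]
    (n : ℕ) (hn : 1 ≤ n) (p : K[X]) (hpm : p.Monic) (hps : p.Separable)
    (hpi : Irreducible p) (hpd : p.natDegree = n) [IsSplittingField K L p]
    (α : Fin n → L) (hα : Function.Injective α)
    (hroots : p.map (algebraMap K L) = ∏ i : Fin n, (X - C (α i)))
    (b : Fin n → K) (k : ℕ) (hk1 : 1 ≤ k) (hkn : k ≤ n) :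
    ∃ c : K, algebraMap K L c =
      MvPolynomial.eval
        (fun i : Fin n => ∑ j : Fin n, algebraMap K L (b j) * α i ^ (j : ℕ))
        (MvPolynomial.esymm (Fin n) L k) := by
  haveI : IsGalois K L := IsGalois.of_separable_splitting_field hps
  haveI : FiniteDimensional K L := IsSplittingField.finiteDimensional L p
  refine (IsGalois.mem_range_algebraMap_iff_fixed (F := K) _).2 ?_
  intro σ
  have key : ∀ x : L, aeval x p = ∏ i : Fin n, (x - α i) := by
    intro x
    rw [← eval_map_algebraMap, hroots, eval_prod]
    simp
  have hperm : ∀ i, ∃ j, σ (α i) = α j := by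
    intro i
    have h1 : aeval (α i) p = 0 := by
      rw [key]
      exact Finset.prod_eq_zero (Finset.mem_univ i) (sub_self _)
    have h2 : aeval (σ (α i)) p = 0 := by
      have := aeval_algHom_apply σ.toAlgHom (α i) p
      rw [h1, map_zero] at this
      exact this
    rw [key, Finset.prod_eq_zero_iff] at h2
    obtain ⟨j, -, hj⟩ := h2
    exact ⟨j, sub_eq_zero.1 hj⟩
  choose e he using hperm
  have hinj : Function.Injective e := by
    intro i j hij
    apply hα
    apply σ.injective
    rw [he, he, hij]
  let E : Equiv.Perm (Fin n) := Equiv.ofBijective e (Finite.injective_iff_bijective.1 hinj)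
  have hE : ∀ i, σ (α i) = α (E i) := he
  conv_rhs => rw [← MvPolynomial.esymm_isSymmetric (Fin n) L k E]
  rw [MvPolynomial.eval_rename]
  simp [MvPolynomial.esymm, map_sum, map_prod, hE]
end

section
/- Suppose b = (b₀,…,b_{n−1}) ∈ Kⁿ is such that the elements 1, β₁(b), β₁(b)², …, β₁(b)^{n−1} of L are linearly independent over K (equivalently, the subfield K(β₁(b)) of L equals K(α₁)). Then the minimal polynomial of β₁(b) over K has degree n, is separable, and its image in L[x] under the algebra map equals the product ∏_{i=1}^{n} (x − β_i(b)); in particular K(β₁(b)) = K(α₁) as subfields of L. -/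
open Polynomial

/-- Claim 4.3, second part: with `p` a monic separable irreducible polynomial of
degree `n ≥ 1` over `K`, `L` a splitting field of `p` with distinct roots
`α₁,…,αₙ`, and `β_i(b) = b₀ + b₁α_i + ⋯ + b_{n−1}α_i^{n−1}`, if
`1, β₁(b), …, β₁(b)^{n−1}` are linearly independent over `K`, then the minimal
polynomial of `β₁(b)` over `K` has degree `n`, is separable, its image in `L[x]`
is `∏ᵢ (x − β_i(b))`, and `K(β₁(b)) = K(α₁)` inside `L`. -/
theorem stmt_3 {K L : Type*} [Field K] [Field L] [Algebra K L]
    (n : ℕ) (hn : 1 ≤ n) (p : K[X]) (hpm : p.Monic) (hps : p.Separable)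
    (hpi : Irreducible p) (hpd : p.natDegree = n) [IsSplittingField K L p]
    (α : Fin n → L) (hα : Function.Injective α)
    (hroots : p.map (algebraMap K L) = ∏ i : Fin n, (X - C (α i)))
    (b : Fin n → K) (β : Fin n → L)
    (hβ : β = fun i : Fin n => ∑ j : Fin n, algebraMap K L (b j) * α i ^ (j : ℕ))
    (hind : LinearIndependent K (fun j : Fin n => β ⟨0, hn⟩ ^ (j : ℕ))) :
    (minpoly K (β ⟨0, hn⟩)).natDegree = n ∧
    (minpoly K (β ⟨0, hn⟩)).Separable ∧
    (minpoly K (β ⟨0, hn⟩)).map (algebraMap K L) = ∏ i : Fin n, (X - C (β i)) ∧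
    IntermediateField.adjoin K {β ⟨0, hn⟩} = IntermediateField.adjoin K {α ⟨0, hn⟩} := by
  have hβ' : ∀ i, β i = aeval (α i) (∑ j : Fin n, C (b j) * X ^ (j : ℕ)) := by
    intro i
    simp [hβ, map_sum]
  generalize (∑ j : Fin n, C (b j) * X ^ (j : ℕ) : K[X]) = q at hβ'
  have hroot : ∀ i, aeval (α i) p = 0 := by
    intro i
    rw [← eval_map_algebraMap, hroots, eval_prod]
    exact Finset.prod_eq_zero (Finset.mem_univ i) (by simp)
  have hmp : ∀ i, p = minpoly K (α i) := fun i =>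
    minpoly.eq_of_irreducible_of_monic hpi (hroot i) hpm
  have htrans : ∀ (f : K[X]) (i j : Fin n), aeval (α i) f = 0 → aeval (α j) f = 0 := by
    intro f i j h
    have hd := minpoly.dvd K (α i) h
    rw [← hmp i] at hd
    exact aeval_eq_zero_of_dvd_aeval_eq_zero hd (hroot j)
  have : IsGalois K L := IsGalois.of_separable_splitting_field hps
  have : FiniteDimensional K L := IsSplittingField.finiteDimensional L p
  set z : Fin n := ⟨0, hn⟩ with hz
  have hia : IsIntegral K (α z) := Algebra.IsIntegral.isIntegral _
  have hib : IsIntegral K (β z) := Algebra.IsIntegral.isIntegral _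
  have hle : IntermediateField.adjoin K {β z} ≤ IntermediateField.adjoin K {α z} := by
    rw [IntermediateField.adjoin_simple_le_iff, hβ']
    exact IntermediateField.algebra_adjoin_le_adjoin K _
      (aeval_mem_adjoin_singleton K (α z))
  have hfa : Module.finrank K (IntermediateField.adjoin K {α z}) = n := by
    rw [IntermediateField.adjoin.finrank hia, ← hmp z, hpd]
  have hfb : n ≤ Module.finrank K (IntermediateField.adjoin K {β z}) := by
    have hl : LinearIndependent K
        (fun j : Fin n => (IntermediateField.AdjoinSimple.gen K (β z)) ^ (j : ℕ)) := by
      apply LinearIndependent.of_comp (IntermediateField.adjoin K {β z}).val.toLinearMap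
      exact hind
    simpa using hl.fintype_card_le_finrank
  have hEq : IntermediateField.adjoin K {β z} = IntermediateField.adjoin K {α z} :=
    IntermediateField.eq_of_le_of_finrank_le hle (by rw [hfa]; exact hfb)
  have hdeg : (minpoly K (β z)).natDegree = n := by
    rw [← IntermediateField.adjoin.finrank hib, hEq, hfa]
  have hmem : α z ∈ Algebra.adjoin K {β z} := by
    rw [← IntermediateField.adjoin_simple_toSubalgebra_of_isAlgebraic hib.isAlgebraic,
      IntermediateField.mem_toSubalgebra, hEq]
    exact IntermediateField.mem_adjoin_simple_self K _
  obtain ⟨g, hg⟩ := (Algebra.adjoin_singleton_eq_range_aeval K (β z) ▸ hmem :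
    α z ∈ (aeval (β z) : K[X] →ₐ[K] L).range)
  have hg' : aeval (β z) g = α z := hg
  have hinv : ∀ i, aeval (β i) g = α i := by
    intro i
    have := htrans (g.comp q - X) z i (by
      rw [map_sub, aeval_comp, ← hβ', hg', aeval_X, sub_self])
    rw [map_sub, aeval_comp, ← hβ', aeval_X] at this
    exact sub_eq_zero.mp this
  have hinj : Function.Injective β := by
    intro i j h
    apply hα
    rw [← hinv i, ← hinv j, h]
  have hrb : ∀ i, aeval (β i) (minpoly K (β z)) = 0 := by
    intro i
    have := htrans ((minpoly K (β z)).comp q) z i (by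
      rw [aeval_comp, ← hβ', minpoly.aeval])
    rwa [aeval_comp, ← hβ'] at this
  refine ⟨hdeg, Algebra.IsSeparable.isSeparable K (β z), ?_, hEq⟩
  have hdvd : (∏ i : Fin n, (X - C (β i))) ∣ (minpoly K (β z)).map (algebraMap K L) := by
    apply Finset.prod_dvd_of_coprime
    · intro i _ j _ hij
      exact pairwise_coprime_X_sub_C hinj hij
    · intro i _
      rw [dvd_iff_isRoot, IsRoot.def, eval_map_algebraMap]
      exact hrb i
  refine (eq_of_monic_of_dvd_of_natDegree_le (monic_prod_of_monic _ _ fun i _ => monic_X_sub_C _)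
    ((minpoly.monic hib).map _) hdvd ?_)
  rw [natDegree_map, hdeg, natDegree_prod_of_monic _ _ fun i _ => monic_X_sub_C _]
  simp
end

section
/- Let R be a commutative ring, n ≥ 1, and a₁,…,aₙ ∈ R. Let M be the n×n matrix whose (k,j) entry is the formal partial derivative ∂e_k/∂x_j of the k-th elementary symmetric polynomial in n variables, evaluated at (a₁,…,aₙ). Then det M = ∏_{1 ≤ i < j ≤ n} (a_i − a_j). -/
open MvPolynomial in
lemma aux_split {R : Type*} [CommRing R] {n : ℕ} (j : Fin n) (k : ℕ) :
    esymm (Fin n) R (k+1) =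
      (∑ t ∈ Finset.powersetCard (k+1) (Finset.univ.erase j), ∏ i ∈ t, (X i : MvPolynomial (Fin n) R))
      + X j * ∑ t ∈ Finset.powersetCard k (Finset.univ.erase j), ∏ i ∈ t, X i := by
  have hj : j ∉ (Finset.univ.erase j : Finset (Fin n)) := by simp
  have hnot : ∀ m, ∀ t ∈ Finset.powersetCard m (Finset.univ.erase j), j ∉ t := by
    intro m t ht h
    exact hj ((Finset.mem_powersetCard.1 ht).1 h)
  rw [esymm]
  conv_lhs => rw [← Finset.insert_erase (Finset.mem_univ j)]
  rw [Finset.powersetCard_succ_insert hj, Finset.sum_union, Finset.sum_image, Finset.mul_sum]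
  · congr 1
    refine Finset.sum_congr rfl fun t ht => ?_
    rw [Finset.prod_insert (hnot _ t ht)]
  · intro s hs t ht h
    have hs' := hnot _ s hs
    have ht' := hnot _ t ht
    rw [← Finset.erase_insert hs', ← Finset.erase_insert ht', h]
  · rw [Finset.disjoint_left]
    intro t ht h
    obtain ⟨u, hu, rfl⟩ := Finset.mem_image.1 h
    exact hnot _ _ ht (Finset.mem_insert_self _ _)

open MvPolynomial in
lemma aux_pd0 {R : Type*} [CommRing R] {n : ℕ} (j : Fin n) (k : ℕ) :
    pderiv j (∑ t ∈ Finset.powersetCard k (Finset.univ.erase j),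
      ∏ i ∈ t, (X i : MvPolynomial (Fin n) R)) = 0 := by
  rw [map_sum]
  refine Finset.sum_eq_zero fun t ht => ?_
  have hne : ∀ i ∈ t, i ≠ j := by
    rintro i hi rfl
    simpa using (Finset.mem_powersetCard.1 ht).1 hi
  clear ht
  induction t using Finset.induction_on with
  | empty => simp
  | insert b t hb ih =>
    rw [Finset.prod_insert hb, Derivation.leibniz,
      ih (fun i hi => hne i (Finset.mem_insert_of_mem hi)),
      pderiv_X_of_ne (hne b (Finset.mem_insert_self _ _)), smul_zero, smul_zero, add_zero]

open MvPolynomial in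
lemma aux_pd {R : Type*} [CommRing R] {n : ℕ} (j : Fin n) (k : ℕ) :
    pderiv j (esymm (Fin n) R (k+1)) = ∑ t ∈ Finset.powersetCard k (Finset.univ.erase j),
      ∏ i ∈ t, (X i : MvPolynomial (Fin n) R) := by
  rw [aux_split j k, map_add, aux_pd0, Derivation.leibniz, aux_pd0]
  simp

open MvPolynomial in
lemma aux_ev {R : Type*} [CommRing R] {n : ℕ} (a : Fin n → R) (j : Fin n) (k : ℕ) :
    eval a (pderiv j (esymm (Fin n) R (k+1))) =
      ∑ i ∈ Finset.range (k+1), eval a (esymm (Fin n) R (k-i)) * (-a j)^i := by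
  induction k with
  | zero => rw [aux_pd]; simp
  | succ k ih =>
    have h := congrArg (eval a) (aux_split (R := R) j k)
    rw [← aux_pd, ← aux_pd, map_add, map_mul, ih, eval_X] at h
    rw [Finset.sum_range_succ']
    simp only [Nat.add_sub_add_right, pow_succ, ← mul_assoc, ← Finset.sum_mul]
    simp only [Nat.sub_zero, pow_zero, mul_one]
    rw [h]
    ring

/-- The Jacobian determinant of the elementary symmetric polynomials: for a
commutative ring `R`, `n ≥ 1` and `a₁,…,aₙ ∈ R`, the determinant of the `n×n`
matrix whose `(k,j)` entry is `(∂e_k/∂x_j)(a₁,…,aₙ)` equals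
`∏_{1 ≤ i < j ≤ n} (a_i − a_j)`. -/
theorem stmt_5 {R : Type*} [CommRing R] (n : ℕ) (hn : 1 ≤ n) (a : Fin n → R) :
    Matrix.det (Matrix.of fun k j : Fin n =>
        MvPolynomial.eval a (MvPolynomial.pderiv j (MvPolynomial.esymm (Fin n) R ((k : ℕ) + 1))))
      = ∏ i : Fin n, ∏ j ∈ Finset.Ioi i, (a i - a j) := by
  classical
  let L : Matrix (Fin n) (Fin n) R := Matrix.of fun k i =>
    if i ≤ k then MvPolynomial.eval a (MvPolynomial.esymm (Fin n) R ((k : ℕ) - i)) else 0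
  have hM : (Matrix.of fun k j : Fin n =>
        MvPolynomial.eval a (MvPolynomial.pderiv j (MvPolynomial.esymm (Fin n) R ((k : ℕ) + 1))))
      = L * (Matrix.vandermonde (fun i => -a i)).transpose := by
    ext k j
    rw [Matrix.mul_apply, Matrix.of_apply, aux_ev]
    simp only [L, Matrix.of_apply, Matrix.transpose_apply, Matrix.vandermonde_apply, Fin.le_def]
    rw [Fin.sum_univ_eq_sum_range (fun i => (if i ≤ (k : ℕ) then
      MvPolynomial.eval a (MvPolynomial.esymm (Fin n) R ((k : ℕ) - i)) else 0) * (-a j) ^ i) n]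
    have hk := k.isLt
    rw [← Finset.sum_subset (Finset.range_subset_range.2 (Nat.succ_le_of_lt hk))]
    · refine Finset.sum_congr rfl fun i hi => ?_
      rw [if_pos (Nat.lt_succ_iff.1 (Finset.mem_range.1 hi))]
    · intro i _ hi
      rw [if_neg (by simp at hi; omega), zero_mul]
  have hL : L.det = 1 := by
    rw [Matrix.det_of_lowerTriangular]
    · simp [L]
    · intro i j hij
      have : i < j := hij
      simp [L, not_le.2 this]
  rw [hM, Matrix.det_mul, hL, one_mul, Matrix.det_transpose, Matrix.det_vandermonde]
  refine Finset.prod_congr rfl fun i _ => Finset.prod_congr rfl fun j _ => ?_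
  ring
end

section
/- Let K be a field, L a finite Galois field extension of K, and q a prime with q ≠ char K. Then the image in the quotient group Kˣ/(Kˣ)^q of the subgroup {a ∈ Kˣ : a = b^q for some b ∈ L} is finite; equivalently, only finitely many cosets of the subgroup (Kˣ)^q of q-th powers in Kˣ contain an element admitting a q-th root in L. -/
/-- Fact 5.1(1) (Poizat's lemma): if `L` is a finite Galois extension of `K` and
`q ≠ char K` is a prime, then the image in `Kˣ/(Kˣ)^q` of the set of `a ∈ Kˣ`
admitting a `q`-th root in `L` is finite. -/
theorem stmt_6 {K L : Type*} [Field K] [Field L] [Algebra K L]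
    [FiniteDimensional K L] [IsGalois K L]
    (q : ℕ) (hq : q.Prime) (hchar : q ≠ ringChar K) :
    Set.Finite
      ((QuotientGroup.mk :
          Kˣ → Kˣ ⧸ (powMonoidHom q : Kˣ →* Kˣ).range) ''
        {a : Kˣ | ∃ b : L, algebraMap K L (a : K) = b ^ q}) := by
  haveI : NeZero q := ⟨hq.ne_zero⟩
  rw [← Set.finite_coe_iff]
  have key : ∀ x : ((QuotientGroup.mk :
          Kˣ → Kˣ ⧸ (powMonoidHom q : Kˣ →* Kˣ).range) ''
        {a : Kˣ | ∃ b : L, algebraMap K L (a : K) = b ^ q}),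
      ∃ (a : Kˣ) (b : L), (QuotientGroup.mk a :
        Kˣ ⧸ (powMonoidHom q : Kˣ →* Kˣ).range) = x.1 ∧
        algebraMap K L (a : K) = b ^ q ∧ b ≠ 0 := by
    rintro ⟨x, a, ⟨b, hb⟩, rfl⟩
    refine ⟨a, b, rfl, hb, ?_⟩
    rintro rfl
    rw [zero_pow hq.ne_zero] at hb
    exact a.ne_zero ((map_eq_zero _).1 hb)
  choose a b hx hab hb using key
  have hz : ∀ x (σ : L ≃ₐ[K] L), (σ (b x) / b x) ^ q = 1 := by
    intro x σ
    rw [div_pow, ← map_pow, ← hab, σ.commutes, hab, div_self (pow_ne_zero _ (hb x))]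
  refine Finite.of_injective
    (fun x => (fun σ => rootsOfUnity.mkOfPowEq _ (hz x σ) :
      (L ≃ₐ[K] L) → rootsOfUnity q L)) ?_
  intro x y hxy
  have h1 : ∀ σ : L ≃ₐ[K] L, σ (b x / b y) = b x / b y := by
    intro σ
    have h2 := congrArg (fun z : rootsOfUnity q L => ((z : Lˣ) : L)) (congrFun hxy σ)
    simp only [rootsOfUnity.coe_mkOfPowEq] at h2
    have h3 : σ (b y) ≠ 0 := by simpa using hb y
    rw [div_eq_div_iff (hb x) (hb y)] at h2
    rw [map_div₀, div_eq_div_iff h3 (hb y), h2, mul_comm]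
  obtain ⟨c, hc⟩ := (IsGalois.mem_range_algebraMap_iff_fixed (F := K) (b x / b y)).2 h1
  have hc0 : c ≠ 0 := by
    rintro rfl
    rw [map_zero] at hc
    exact div_ne_zero (hb x) (hb y) hc.symm
  apply Subtype.ext
  rw [← hx x, ← hx y, eq_comm, QuotientGroup.eq]
  refine ⟨Units.mk0 c hc0, ?_⟩
  apply Units.ext
  apply (algebraMap K L).injective
  simp only [powMonoidHom_apply, Units.val_pow_eq_pow_val, Units.val_mk0, map_pow, hc,
    Units.val_mul, Units.val_inv_eq_inv_val, map_mul, map_inv₀, hab]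
  rw [div_pow, div_eq_mul_inv, mul_comm]
end
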